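/- arXiv:1002.0144 — 6 statements merged into one kernel-verified Lean document; each statement's English description precedes it below -/
import Mathlib

section
/- Let a, b, c, d : ℝ → ℝ be continuously differentiable with a(t) ≠ 0, let μ : ℝ → ℝ be a twice continuously differentiable solution of the characteristic equation μ′′ − (a′/a + 2c − 2d)μ′ + 4(ab − cd + ca′/(2a) − c′/2)μ = 0 with μ(t) > 0 on an open interval I. Set λ(t) = exp(∫₀ᵗ(c(s) − d(s))ds), α(t) = μ′/(4aμ) − c/(2a), β(t) = k·λ(t)/μ(t) for a real constant k, and let γ : I → ℝ be continuously differentiable with γ′(t) = −a(t)β(t)². Then for each fixed y ∈ ℝ the kernel K(x,y,t) = (2πμ(t))^{−1/2} exp(i(α(t)x² + β(t)xy + γ(t)y²)) satisfies the time-dependent Schrödinger equation i ∂K/∂t = HK on ℝ × I, i.e. i K_t = −a K_xx + b x² K − i c (K + x K_x) − i d x K_x. -/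
/-- λ(t) = exp(∫₀ᵗ (c(s) − d(s)) ds). -/
noncomputable def lamFun (c d : ℝ → ℝ) (t : ℝ) : ℝ :=
  Real.exp (∫ s in (0:ℝ)..t, c s - d s)

/-- α(t) = μ′/(4aμ) − c/(2a). -/
noncomputable def alphaFun (a c μ : ℝ → ℝ) (t : ℝ) : ℝ :=
  deriv μ t / (4 * a t * μ t) - c t / (2 * a t)

/-- β(t) = k·λ(t)/μ(t). -/
noncomputable def betaFun (c d μ : ℝ → ℝ) (k t : ℝ) : ℝ :=
  k * lamFun c d t / μ t

/-- The kernel K(x,y,t) = (2πμ(t))^{−1/2} exp(i(α(t)x² + β(t)xy + γ(t)y²)). -/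
noncomputable def Kker (a c d μ : ℝ → ℝ) (k : ℝ) (γ : ℝ → ℝ) (x y t : ℝ) : ℂ :=
  (1 / Real.sqrt (2 * Real.pi * μ t) : ℝ) *
    Complex.exp (Complex.I *
      ((alphaFun a c μ t : ℂ) * (x : ℂ) ^ 2 + (betaFun c d μ k t : ℂ) * (x : ℂ) * (y : ℂ)
        + (γ t : ℂ) * (y : ℂ) ^ 2))

lemma lamFun_hasDerivAt (c d : ℝ → ℝ) (hc : Continuous c) (hd : Continuous d) (t : ℝ) :
    HasDerivAt (lamFun c d) (lamFun c d t * (c t - d t)) t := by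
  have hcd : Continuous (fun s => c s - d s) := hc.sub hd
  have h := intervalIntegral.integral_hasDerivAt_right
    (hcd.intervalIntegrable 0 t) (hcd.stronglyMeasurableAtFilter _ _) hcd.continuousAt
  exact h.exp

lemma betaFun_hasDerivAt (a c d μ : ℝ → ℝ) (k t m1 : ℝ) (hc : Continuous c) (hd : Continuous d)
    (hane : a t ≠ 0) (hμ : HasDerivAt μ m1 t) (hm1 : deriv μ t = m1) (h0 : μ t ≠ 0) :
    HasDerivAt (betaFun c d μ k)
      (-(4 * a t * alphaFun a c μ t + c t + d t) * betaFun c d μ k t) t := by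
  have h := ((lamFun_hasDerivAt c d hc hd t).const_mul k).div hμ h0
  refine h.congr_deriv ?_
  unfold alphaFun betaFun
  rw [hm1]
  field_simp
  ring

lemma alphaFun_hasDerivAt (a b c d μ : ℝ → ℝ) (t : ℝ)
    (ha : HasDerivAt a (deriv a t) t) (hc : HasDerivAt c (deriv c t) t)
    (hane : a t ≠ 0) (hμ : HasDerivAt μ (deriv μ t) t)
    (hμ2 : HasDerivAt (deriv μ) (deriv (deriv μ) t) t) (h0 : μ t ≠ 0)
    (hchar : deriv (deriv μ) t - (deriv a t / a t + 2 * c t - 2 * d t) * deriv μ t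
        + 4 * (a t * b t - c t * d t + c t * deriv a t / (2 * a t) - deriv c t / 2)
          * μ t = 0) :
    HasDerivAt (alphaFun a c μ)
      (-(4 * a t * alphaFun a c μ t ^ 2 + b t + 2 * (c t + d t) * alphaFun a c μ t)) t := by
  have h := (hμ2.div ((ha.const_mul 4).mul hμ) (by simp [hane, h0])).sub
    (hc.div (ha.const_mul 2) (by simp [hane]))
  refine h.congr_deriv ?_
  have e : deriv (deriv μ) t = (deriv a t / a t + 2 * c t - 2 * d t) * deriv μ t
        - 4 * (a t * b t - c t * d t + c t * deriv a t / (2 * a t) - deriv c t / 2)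
          * μ t := by linarith
  unfold alphaFun
  simp only [Pi.mul_apply]
  rw [e]
  field_simp
  ring

lemma amp_hasDerivAt (μ : ℝ → ℝ) (t m1 : ℝ) (hμ : HasDerivAt μ m1 t) (h0 : 0 < μ t) :
    HasDerivAt (fun s => 1 / Real.sqrt (2 * Real.pi * μ s))
      (1 / Real.sqrt (2 * Real.pi * μ t) * (-(m1 / (2 * μ t)))) t := by
  have hp : 0 < 2 * Real.pi * μ t := by positivity
  have hs : 0 < Real.sqrt (2 * Real.pi * μ t) := Real.sqrt_pos.2 hp
  have h := ((hμ.const_mul (2 * Real.pi)).sqrt hp.ne').inv hs.ne'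
  simp only [one_div]
  refine h.congr_deriv ?_
  rw [Real.sq_sqrt hp.le]
  field_simp

lemma Kker_hasDerivAt_x (a c d μ : ℝ → ℝ) (k : ℝ) (γ : ℝ → ℝ) (x y t : ℝ) :
    HasDerivAt (fun x' => Kker a c d μ k γ x' y t)
      (Complex.I * (2 * (alphaFun a c μ t : ℂ) * (x : ℂ) + (betaFun c d μ k t : ℂ) * (y : ℂ))
        * Kker a c d μ k γ x y t) x := by
  have hx : HasDerivAt (fun x' : ℝ => (x' : ℂ)) 1 x := Complex.ofRealCLM.hasDerivAt
  have h := ((((((hx.pow 2).const_mul (alphaFun a c μ t : ℂ)).add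
    ((hx.const_mul (betaFun c d μ k t : ℂ)).mul_const (y : ℂ))).add_const
      ((γ t : ℂ) * (y : ℂ) ^ 2)).const_mul Complex.I).cexp).const_mul
        (((1 / Real.sqrt (2 * Real.pi * μ t) : ℝ)) : ℂ)
  refine h.congr_deriv ?_
  simp only [Kker, Pi.add_apply, Pi.pow_apply, Pi.mul_apply]
  push_cast
  ring

/-- for any solution μ of the characteristic equation, positive on an open
interval (t₁,t₂), and any γ with γ′ = −aβ², the kernel
K(x,y,t) = (2πμ)^{−1/2} exp(i(αx² + βxy + γy²)) satisfies, for each fixed y, the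
time-dependent Schrödinger equation i K_t = HK. -/
theorem statement_5
    (a b c d μ γ : ℝ → ℝ) (k t₁ t₂ : ℝ)
    (ha : ContDiff ℝ 1 a) (hb : ContDiff ℝ 1 b)
    (hc : ContDiff ℝ 1 c) (hd : ContDiff ℝ 1 d)
    (hane : ∀ t, a t ≠ 0)
    (hμ : ContDiff ℝ 2 μ)
    -- the characteristic equation μ′′ − (a′/a + 2c − 2d)μ′ + 4σμ = 0
    (hchar : ∀ t, deriv (deriv μ) t - (deriv a t / a t + 2 * c t - 2 * d t) * deriv μ t
        + 4 * (a t * b t - c t * d t + c t * deriv a t / (2 * a t) - deriv c t / 2)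
          * μ t = 0)
    (hμpos : ∀ t ∈ Set.Ioo t₁ t₂, 0 < μ t)
    -- γ is continuously differentiable with γ′ = −aβ²
    (hγ : ∀ t ∈ Set.Ioo t₁ t₂, HasDerivAt γ (-(a t) * (betaFun c d μ k t) ^ 2) t)
    (hγC : ContinuousOn (fun t => -(a t) * (betaFun c d μ k t) ^ 2) (Set.Ioo t₁ t₂)) :
    ∀ y x : ℝ, ∀ t ∈ Set.Ioo t₁ t₂,
      Complex.I * deriv (fun t' => Kker a c d μ k γ x y t') t =
        -(a t : ℂ) * deriv (fun x' => deriv (fun x'' => Kker a c d μ k γ x'' y t) x') x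
          + (b t : ℂ) * (x : ℂ) ^ 2 * Kker a c d μ k γ x y t
          - Complex.I * (c t : ℂ) *
              (Kker a c d μ k γ x y t + (x : ℂ) * deriv (fun x' => Kker a c d μ k γ x' y t) x)
          - Complex.I * (d t : ℂ) *
              ((x : ℂ) * deriv (fun x' => Kker a c d μ k γ x' y t) x) := by
  intro y x t ht
  have h0 := hμpos t ht
  have hμ1 : HasDerivAt μ (deriv μ t) t :=
    (hμ.differentiable (by norm_num) t).hasDerivAt
  have hμ2 : HasDerivAt (deriv μ) (deriv (deriv μ) t) t := by
    have h : ContDiff ℝ 1 (deriv μ) := ContDiff.deriv' hμ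
    exact (h.differentiable (by norm_num) t).hasDerivAt
  have ha1 := (ha.differentiable (by norm_num) t).hasDerivAt
  have hc1 := (hc.differentiable (by norm_num) t).hasDerivAt
  have hα := (alphaFun_hasDerivAt a b c d μ t ha1 hc1 (hane t) hμ1 hμ2 h0.ne' (hchar t)).ofReal_comp
  have hβ := (betaFun_hasDerivAt a c d μ k t _ hc.continuous hd.continuous (hane t) hμ1 rfl
    h0.ne').ofReal_comp
  have hA := (amp_hasDerivAt μ t _ hμ1 h0).ofReal_comp
  have hg := (hγ t ht).ofReal_comp
  have hm : deriv μ t / (2 * μ t) = 2 * a t * alphaFun a c μ t + c t := by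
    have h1 := hane t
    have h2 := h0.ne'
    unfold alphaFun
    field_simp
    ring
  rw [hm] at hA
  have hT := hA.mul ((((hα.mul_const ((x : ℂ) ^ 2)).add
    ((hβ.mul_const (x : ℂ)).mul_const (y : ℂ))).add
      (hg.mul_const ((y : ℂ) ^ 2))).const_mul Complex.I).cexp
  have hT' : deriv (fun t' => Kker a c d μ k γ x y t') t = _ := hT.deriv
  have hX : ∀ x', deriv (fun x'' => Kker a c d μ k γ x'' y t) x' = _ :=
    fun x' => (Kker_hasDerivAt_x a c d μ k γ x' y t).deriv
  have hx : HasDerivAt (fun x' : ℝ => (x' : ℂ)) 1 x := Complex.ofRealCLM.hasDerivAt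
  have hXX := ((((hx.const_mul (2 * (alphaFun a c μ t : ℂ))).add_const
    ((betaFun c d μ k t : ℂ) * (y : ℂ))).const_mul Complex.I).mul
      (Kker_hasDerivAt_x a c d μ k γ x y t))
  have hXX' : deriv (fun x' : ℝ => Complex.I * (2 * (alphaFun a c μ t : ℂ) * (x' : ℂ)
      + (betaFun c d μ k t : ℂ) * (y : ℂ)) * Kker a c d μ k γ x' y t) x = _ := hXX.deriv
  simp only [hX]
  rw [hT', hXX']
  simp only [Kker, Pi.add_apply, Pi.mul_apply]
  push_cast
  generalize Complex.exp _ = E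
  have hI : Complex.I ^ 2 = -1 := Complex.I_sq
  generalize (1 / ((Real.sqrt (2 * Real.pi * μ t) : ℝ) : ℂ)) = A
  generalize ((alphaFun a c μ t : ℝ) : ℂ) = α
  generalize ((betaFun c d μ k t : ℝ) : ℂ) = β
  grind
end

section
/- (Lemma 3, verification.) Let a, c, d : ℝ → ℝ be continuously differentiable, b : ℝ → ℝ continuous, a(t) ≠ 0 for all t, let C₀ be a real constant, and let κ : ℝ → ℝ be a twice continuously differentiable function with κ(t) ≠ 0 satisfying the auxiliary (Ermakov) equation κ′′ − (a′/a)κ′ + [4ab + (a′/a − c − d)(c + d) − c′ − d′]κ = C₀(2a)²/κ³. Set λ(t) = exp(∫₀ᵗ(c(s) − d(s))ds) and define A(t) = κ²λ, B(t) = [((κ′ − (c+d)κ)/(2a))² + C₀/κ²]·λ, C(t) = κ·((c+d)κ − κ′)/(2a)·λ. Then A, B, C satisfy the linear system A′ + 4aC − (3c + d)A = 0, B′ − 4bC + (c + 3d)B = 0, C′ + 2(aB − bA) − (c − d)C = 0. -/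
/-- A(t) = κ²·λ. -/
noncomputable def Afun (c d κ : ℝ → ℝ) (t : ℝ) : ℝ :=
  κ t ^ 2 * lamFun c d t

/-- B(t) = [((κ′ − (c+d)κ)/(2a))² + C₀/κ²]·λ. -/
noncomputable def Bfun (a c d κ : ℝ → ℝ) (C₀ : ℝ) (t : ℝ) : ℝ :=
  (((deriv κ t - (c t + d t) * κ t) / (2 * a t)) ^ 2 + C₀ / κ t ^ 2) * lamFun c d t

/-- C(t) = κ·((c+d)κ − κ′)/(2a)·λ. -/
noncomputable def Cfun (a c d κ : ℝ → ℝ) (t : ℝ) : ℝ :=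
  κ t * (((c t + d t) * κ t - deriv κ t) / (2 * a t)) * lamFun c d t

/-- Lemma 3, verification: if κ solves the auxiliary (Ermakov) equation
κ′′ − (a′/a)κ′ + [4ab + (a′/a − c − d)(c+d) − c′ − d′]κ = C₀(2a)²/κ³, then
A = κ²λ, B = [((κ′−(c+d)κ)/(2a))² + C₀/κ²]λ, C = κ((c+d)κ−κ′)/(2a)·λ satisfy
A′ + 4aC − (3c+d)A = 0, B′ − 4bC + (c+3d)B = 0, C′ + 2(aB − bA) − (c−d)C = 0. -/
theorem statement_6
    (a b c d κ : ℝ → ℝ) (C₀ : ℝ)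
    (ha : ContDiff ℝ 1 a) (hc : ContDiff ℝ 1 c) (hd : ContDiff ℝ 1 d)
    (hb : Continuous b)
    (hane : ∀ t, a t ≠ 0)
    (hκ : ContDiff ℝ 2 κ) (hκne : ∀ t, κ t ≠ 0)
    -- the auxiliary (Ermakov) equation
    (hErm : ∀ t, deriv (deriv κ) t - (deriv a t / a t) * deriv κ t
        + (4 * a t * b t + (deriv a t / a t - c t - d t) * (c t + d t)
            - deriv c t - deriv d t) * κ t
        = C₀ * (2 * a t) ^ 2 / κ t ^ 3) :
    (∀ t, deriv (Afun c d κ) t + 4 * a t * Cfun a c d κ t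
        - (3 * c t + d t) * Afun c d κ t = 0) ∧
    (∀ t, deriv (Bfun a c d κ C₀) t - 4 * b t * Cfun a c d κ t
        + (c t + 3 * d t) * Bfun a c d κ C₀ t = 0) ∧
    (∀ t, deriv (Cfun a c d κ) t
        + 2 * (a t * Bfun a c d κ C₀ t - b t * Afun c d κ t)
        - (c t - d t) * Cfun a c d κ t = 0) := by
  have hκ1 : ∀ t, HasDerivAt κ (deriv κ t) t := fun t =>
    ((hκ.differentiable (by norm_num)) t).hasDerivAt
  have hκ2 : ∀ t, HasDerivAt (deriv κ) (deriv (deriv κ) t) t := by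
    intro t
    have h : ContDiff ℝ 1 (deriv κ) := by
      have h2 : ContDiff ℝ (1 + 1) κ := by
        have e : (1 + 1 : WithTop ℕ∞) = 2 := by norm_num
        rw [e]; exact hκ
      exact (contDiff_succ_iff_deriv.1 h2).2.2
    exact ((h.differentiable (by norm_num)) t).hasDerivAt
  have ha1 : ∀ t, HasDerivAt a (deriv a t) t := fun t =>
    ((ha.differentiable (by norm_num)) t).hasDerivAt
  have hc1 : ∀ t, HasDerivAt c (deriv c t) t := fun t =>
    ((hc.differentiable (by norm_num)) t).hasDerivAt
  have hd1 : ∀ t, HasDerivAt d (deriv d t) t := fun t =>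
    ((hd.differentiable (by norm_num)) t).hasDerivAt
  have hl : ∀ t, HasDerivAt (lamFun c d) (lamFun c d t * (c t - d t)) t := by
    intro t
    have hcont : Continuous (fun s => c s - d s) := hc.continuous.sub hd.continuous
    exact (hcont.integral_hasStrictDerivAt 0 t).hasDerivAt.exp
  obtain ⟨u, hu⟩ : ∃ u : ℝ → ℝ, u = fun t => (deriv κ t - (c t + d t) * κ t) / (2 * a t) :=
    ⟨_, rfl⟩
  have hκu : ∀ t, deriv κ t = 2 * a t * u t + (c t + d t) * κ t := by
    intro t
    have := hane t
    simp only [hu]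
    field_simp
    ring
  have hu1 : ∀ t, HasDerivAt u
      (-2 * b t * κ t - (c t + d t) * u t + 2 * a t * C₀ / κ t ^ 3) t := by
    intro t
    have h1 := hane t
    have h2 := hκne t
    have h := (((hκ2 t).sub (((hc1 t).add (hd1 t)).mul (hκ1 t))).div ((ha1 t).const_mul 2)
      (mul_ne_zero two_ne_zero h1))
    have hE : deriv (deriv κ) t = (deriv a t / a t) * deriv κ t
        - (4 * a t * b t + (deriv a t / a t - c t - d t) * (c t + d t)
            - deriv c t - deriv d t) * κ t + C₀ * (2 * a t) ^ 2 / κ t ^ 3 := by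
      linarith [hErm t]
    rw [hE] at h
    rw [hu]
    refine h.congr_deriv ?_
    simp only [Pi.add_apply, Pi.sub_apply, Pi.mul_apply]
    field_simp
    ring
  have hA : Afun c d κ = fun t => κ t ^ 2 * lamFun c d t := rfl
  have hB : Bfun a c d κ C₀ = fun t => (u t ^ 2 + C₀ / κ t ^ 2) * lamFun c d t := by
    rw [hu]; rfl
  have hC : Cfun a c d κ = fun t => -(κ t * u t) * lamFun c d t := by
    funext t
    simp only [Cfun, hu]
    ring
  have hA1 := fun t => ((hκ1 t).pow 2).mul (hl t)
  have hB1 := fun t => (((hu1 t).pow 2).add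
    ((hasDerivAt_const t C₀).div ((hκ1 t).pow 2) (pow_ne_zero 2 (hκne t)))).mul (hl t)
  have hC1 := fun t => (((hκ1 t).mul (hu1 t)).neg).mul (hl t)
  refine ⟨fun t => ?_, fun t => ?_, fun t => ?_⟩
  · have h := (hA1 t).deriv
    have e : deriv (Afun c d κ) t = _ := h
    rw [e, hA, hC]
    simp [hκu t]
    ring
  · have h2 := hκne t
    have h := (hB1 t).deriv
    have e : Bfun a c d κ C₀ = (u ^ 2 + (fun _ => C₀) / κ ^ 2) * lamFun c d := hB
    rw [← e] at h
    rw [h, hB, hC]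
    simp [hκu t]
    field_simp
    ring
  · have h2 := hκne t
    have h := (hC1 t).deriv
    have e : Cfun a c d κ = -(κ * u) * lamFun c d := hC
    rw [← e] at h
    rw [h, hA, hB, hC]
    simp [hκu t]
    field_simp
    ring
end

section
/- (Phase equation.) Let a, b, c, d : ℝ → ℝ with a, c, d continuously differentiable, b continuous, a(t) ≠ 0 on an open interval I, and Q(t) = 4ab + (a′/a − c − d)(c+d) − c′ − d′. Let C₀ > 0, let κ₁ : I → ℝ be a twice continuously differentiable nonvanishing solution of the homogeneous equation κ₁′′ − (a′/a)κ₁′ + Qκ₁ = 0, and let κ : I → ℝ be a twice continuously differentiable nonvanishing solution of κ′′ − (a′/a)κ′ + Qκ = C₀(2a)²/κ³. Set W = κ₁κ′ − κ₁′κ and define φ(t) = arctan((κ/κ₁)·W/(2a√C₀)). Then φ is differentiable on I and φ′(t) = 2√C₀·a(t)/κ(t)² for all t ∈ I. -/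
/-- Q(t) = 4ab + (a′/a − c − d)(c+d) − c′ − d′. -/
noncomputable def Qfun (a b c d : ℝ → ℝ) (t : ℝ) : ℝ :=
  4 * a t * b t + (deriv a t / a t - c t - d t) * (c t + d t) - deriv c t - deriv d t

/-- The Wronskian W = κ₁κ′ − κ₁′κ. -/
noncomputable def Wfun (κ₁ κ : ℝ → ℝ) (t : ℝ) : ℝ :=
  κ₁ t * deriv κ t - deriv κ₁ t * κ t

/-- The phase φ(t) = arctan((κ/κ₁)·W/(2a√C₀)). -/
noncomputable def phiFun (a κ₁ κ : ℝ → ℝ) (C₀ t : ℝ) : ℝ :=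
  Real.arctan ((κ t / κ₁ t) * (Wfun κ₁ κ t / (2 * a t * Real.sqrt C₀)))

/-- Phase equation: if κ₁ solves the homogeneous equation and κ solves
the Ermakov equation with C₀ > 0 on an open interval (t₁,t₂), then
φ = arctan((κ/κ₁)W/(2a√C₀)) is differentiable with φ′ = 2√C₀·a/κ². -/
theorem statement_16
    (a b c d κ₁ κ : ℝ → ℝ) (t₁ t₂ : ℝ) (C₀ : ℝ) (hC₀ : 0 < C₀)
    (ha : ContDiff ℝ 1 a) (hc : ContDiff ℝ 1 c) (hd : ContDiff ℝ 1 d)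
    (hb : Continuous b)
    (hane : ∀ t ∈ Set.Ioo t₁ t₂, a t ≠ 0)
    (hκ₁ : ContDiffOn ℝ 2 κ₁ (Set.Ioo t₁ t₂)) (hκ : ContDiffOn ℝ 2 κ (Set.Ioo t₁ t₂))
    (hκ₁ne : ∀ t ∈ Set.Ioo t₁ t₂, κ₁ t ≠ 0) (hκne : ∀ t ∈ Set.Ioo t₁ t₂, κ t ≠ 0)
    (hEq1 : ∀ t ∈ Set.Ioo t₁ t₂, deriv (deriv κ₁) t - (deriv a t / a t) * deriv κ₁ t
        + Qfun a b c d t * κ₁ t = 0)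
    (hEq : ∀ t ∈ Set.Ioo t₁ t₂, deriv (deriv κ) t - (deriv a t / a t) * deriv κ t
        + Qfun a b c d t * κ t = C₀ * (2 * a t) ^ 2 / κ t ^ 3) :
    ∀ t ∈ Set.Ioo t₁ t₂,
      HasDerivAt (phiFun a κ₁ κ C₀) (2 * Real.sqrt C₀ * a t / κ t ^ 2) t := by
  intro t ht
  have hcd : ∀ f : ℝ → ℝ, ContDiffOn ℝ 2 f (Set.Ioo t₁ t₂) →
      HasDerivAt f (deriv f t) t ∧ HasDerivAt (deriv f) (deriv (deriv f) t) t := by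
    intro f hf
    have h2 : ContDiffOn ℝ 1 (deriv f) (Set.Ioo t₁ t₂) :=
      hf.deriv_of_isOpen isOpen_Ioo (by norm_num)
    exact ⟨((hf.differentiableOn (by norm_num)).differentiableAt
        (isOpen_Ioo.mem_nhds ht)).hasDerivAt,
      ((h2.differentiableOn (by norm_num)).differentiableAt
        (isOpen_Ioo.mem_nhds ht)).hasDerivAt⟩
  obtain ⟨h1, h1'⟩ := hcd κ₁ hκ₁
  obtain ⟨h2, h2'⟩ := hcd κ hκ
  have h3 : HasDerivAt a (deriv a t) t := (ha.differentiable (by norm_num) t).hasDerivAt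
  have e1 := hEq1 t ht
  have e2 := hEq t ht
  have n1 := hκ₁ne t ht
  have n2 := hκne t ht
  have na := hane t ht
  have hs : Real.sqrt C₀ ^ 2 = C₀ := Real.sq_sqrt hC₀.le
  have ns : Real.sqrt C₀ ≠ 0 := (Real.sqrt_pos.2 hC₀).ne'
  have hW : HasDerivAt (Wfun κ₁ κ)
      (deriv a t / a t * Wfun κ₁ κ t + κ₁ t * (Real.sqrt C₀ ^ 2 * (2 * a t) ^ 2 / κ t ^ 3)) t := by
    refine ((h1.mul h2').sub (h1'.mul h2)).congr_deriv ?_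
    rw [hs]
    simp only [Wfun]
    linear_combination κ₁ t * e2 - κ t * e1
  have hd1 := h2.div h1 n1
  have hd2 := hW.div ((h3.const_mul 2).mul_const (Real.sqrt C₀))
    (mul_ne_zero (mul_ne_zero two_ne_zero na) ns)
  refine (hd1.mul hd2).arctan.congr_deriv ?_
  simp only [Pi.mul_apply, Pi.div_apply]
  have hw : κ₁ t * deriv κ t = Wfun κ₁ κ t + deriv κ₁ t * κ t := by simp only [Wfun]; ring
  have hw' : deriv κ t = (Wfun κ₁ κ t + deriv κ₁ t * κ t) / κ₁ t := by
    rw [← hw]; field_simp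
  rw [hw']
  generalize Wfun κ₁ κ t = w
  generalize Real.sqrt C₀ = s at *
  have hp : (1 + (κ t / κ₁ t * (w / (2 * a t * s))) ^ 2) ≠ 0 := by positivity
  rw [one_div, inv_mul_eq_iff_eq_mul₀ hp]
  field_simp
  ring
end

section
/- Let a, b, c, d : ℝ → ℝ with a, c, d continuously differentiable, b continuous, a(t) ≠ 0 for all t, and Q(t) = 4ab + (a′/a − c − d)(c+d) − c′ − d′. Let λ(t) = exp(∫₀ᵗ(c(s) − d(s))ds) and let κ : ℝ → ℝ be twice continuously differentiable; set μ(t) := κ(t)·λ(t). Then κ satisfies the homogeneous auxiliary equation κ′′ − (a′/a)κ′ + Qκ = 0 if and only if μ satisfies the characteristic equation μ′′ − (a′/a + 2c − 2d)μ′ + 4(ab − cd + ca′/(2a) − c′/2)μ = 0. -/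
/-- with μ(t) = κ(t)·λ(t), κ solves the homogeneous auxiliary equation
κ′′ − (a′/a)κ′ + Qκ = 0 if and only if μ solves the characteristic equation
μ′′ − (a′/a + 2c − 2d)μ′ + 4(ab − cd + ca′/(2a) − c′/2)μ = 0. -/
theorem statement_17
    (a b c d κ : ℝ → ℝ)
    (ha : ContDiff ℝ 1 a) (hc : ContDiff ℝ 1 c) (hd : ContDiff ℝ 1 d)
    (hb : Continuous b)
    (hane : ∀ t, a t ≠ 0)
    (hκ : ContDiff ℝ 2 κ) :
    (∀ t, deriv (deriv κ) t - (deriv a t / a t) * deriv κ t + Qfun a b c d t * κ t = 0)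
      ↔
    (∀ t, deriv (deriv fun s => κ s * lamFun c d s) t
        - (deriv a t / a t + 2 * c t - 2 * d t)
            * deriv (fun s => κ s * lamFun c d s) t
        + 4 * (a t * b t - c t * d t + c t * deriv a t / (2 * a t) - deriv c t / 2)
            * (κ t * lamFun c d t) = 0) := by
  have hlam : ∀ t, HasDerivAt (lamFun c d) (lamFun c d t * (c t - d t)) t := by
    intro t
    have hcont : Continuous fun s => c s - d s := hc.continuous.sub hd.continuous
    exact (hcont.integral_hasStrictDerivAt 0 t).hasDerivAt.exp
  have hk1 : ∀ t, HasDerivAt κ (deriv κ t) t := fun t =>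
    (hκ.differentiable (by norm_num) t).hasDerivAt
  have hk2 : ∀ t, HasDerivAt (deriv κ) (deriv (deriv κ) t) t := by
    have h : ContDiff ℝ (1 + 1) κ := by
      rw [one_add_one_eq_two]; exact hκ
    intro t
    exact ((contDiff_succ_iff_deriv.1 h).2.2.differentiable (by norm_num) t).hasDerivAt
  have hc1 : ∀ t, HasDerivAt c (deriv c t) t := fun t =>
    (hc.differentiable (by norm_num) t).hasDerivAt
  have hd1 : ∀ t, HasDerivAt d (deriv d t) t := fun t =>
    (hd.differentiable (by norm_num) t).hasDerivAt
  have hm1 : deriv (fun s => κ s * lamFun c d s)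
      = fun t => deriv κ t * lamFun c d t + κ t * (lamFun c d t * (c t - d t)) := by
    funext t
    exact ((hk1 t).mul (hlam t)).deriv
  have hm2 : ∀ t, deriv (fun t => deriv κ t * lamFun c d t
      + κ t * (lamFun c d t * (c t - d t))) t
      = (deriv (deriv κ) t * lamFun c d t + deriv κ t * (lamFun c d t * (c t - d t)))
        + (deriv κ t * (lamFun c d t * (c t - d t))
          + κ t * (lamFun c d t * (c t - d t) * (c t - d t)
            + lamFun c d t * (deriv c t - deriv d t))) := by
    intro t
    exact (((hk2 t).mul (hlam t)).add
      ((hk1 t).mul ((hlam t).mul ((hc1 t).sub (hd1 t))))).deriv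
  refine forall_congr' fun t => ?_
  rw [hm1, hm2]
  have hpos : lamFun c d t ≠ 0 := (Real.exp_pos _).ne'
  have hat := hane t
  rw [← mul_right_inj' hpos, mul_zero]
  refine Eq.congr ?_ rfl
  unfold Qfun
  field_simp
  ring
end

section
/- (Constancy of the phase parameter.) Let a, b, c, d : ℝ → ℝ with a, c, d continuously differentiable, b continuous, a(t) ≠ 0 on an open interval I, and Q(t) = 4ab + (a′/a − c − d)(c+d) − c′ − d′. Let C₀ > 0, let κ₁ : I → ℝ be a nonvanishing twice continuously differentiable solution of κ₁′′ − (a′/a)κ₁′ + Qκ₁ = 0, let κ : I → ℝ be a nonvanishing twice continuously differentiable solution of κ′′ − (a′/a)κ′ + Qκ = C₀(2a)²/κ³, set W = κ₁κ′ − κ₁′κ, δ(t) = C₀^{1/4}/√(C₀(κ₁/κ)² + (W/(2a))²), and let γ : I → ℝ be differentiable with γ′(t) + a(t)/κ₁(t)² = 0. Then the function t ↦ γ(t) + (δ(t)²/(2√C₀))·(κ(t)/κ₁(t))·(W(t)/(2a(t))) has derivative identically zero on I. -/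
/-- δ(t) = C₀^{1/4}/√(C₀(κ₁/κ)² + (W/(2a))²). -/
noncomputable def deltaFun (a κ₁ κ : ℝ → ℝ) (C₀ t : ℝ) : ℝ :=
  C₀ ^ ((1 : ℝ) / 4) /
    Real.sqrt (C₀ * (κ₁ t / κ t) ^ 2 + (Wfun κ₁ κ t / (2 * a t)) ^ 2)

theorem aux_derivs (f : ℝ → ℝ) (t₁ t₂ : ℝ) (hf : ContDiffOn ℝ 2 f (Set.Ioo t₁ t₂))
    (t : ℝ) (ht : t ∈ Set.Ioo t₁ t₂) :
    HasDerivAt f (deriv f t) t ∧ HasDerivAt (deriv f) (deriv (deriv f) t) t := by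
  have hn : Set.Ioo t₁ t₂ ∈ nhds t := isOpen_Ioo.mem_nhds ht
  have h2 : ContDiffOn ℝ 1 (deriv f) (Set.Ioo t₁ t₂) :=
    hf.deriv_of_isOpen isOpen_Ioo (by norm_num)
  exact ⟨((hf.contDiffAt hn).differentiableAt (by norm_num)).hasDerivAt,
    ((h2.contDiffAt hn).differentiableAt (by norm_num)).hasDerivAt⟩

/-- Constancy of the phase parameter: if κ₁ solves the homogeneous
equation, κ solves the Ermakov equation with C₀ > 0, and γ′ + a/κ₁² = 0, then
γ + (δ²/(2√C₀))·(κ/κ₁)·(W/(2a)) has identically zero derivative. -/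
theorem statement_18
    (a b c d κ₁ κ γ : ℝ → ℝ) (t₁ t₂ : ℝ) (C₀ : ℝ) (hC₀ : 0 < C₀)
    (ha : ContDiff ℝ 1 a) (hc : ContDiff ℝ 1 c) (hd : ContDiff ℝ 1 d)
    (hb : Continuous b)
    (hane : ∀ t ∈ Set.Ioo t₁ t₂, a t ≠ 0)
    (hκ₁ : ContDiffOn ℝ 2 κ₁ (Set.Ioo t₁ t₂)) (hκ : ContDiffOn ℝ 2 κ (Set.Ioo t₁ t₂))
    (hκ₁ne : ∀ t ∈ Set.Ioo t₁ t₂, κ₁ t ≠ 0) (hκne : ∀ t ∈ Set.Ioo t₁ t₂, κ t ≠ 0)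
    (hEq1 : ∀ t ∈ Set.Ioo t₁ t₂, deriv (deriv κ₁) t - (deriv a t / a t) * deriv κ₁ t
        + Qfun a b c d t * κ₁ t = 0)
    (hEq : ∀ t ∈ Set.Ioo t₁ t₂, deriv (deriv κ) t - (deriv a t / a t) * deriv κ t
        + Qfun a b c d t * κ t = C₀ * (2 * a t) ^ 2 / κ t ^ 3)
    (hγ : ∀ t ∈ Set.Ioo t₁ t₂, HasDerivAt γ (-(a t) / κ₁ t ^ 2) t) :
    ∀ t ∈ Set.Ioo t₁ t₂,
      deriv (fun s => γ s + (deltaFun a κ₁ κ C₀ s) ^ 2 / (2 * Real.sqrt C₀)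
          * (κ s / κ₁ s) * (Wfun κ₁ κ s / (2 * a s))) t = 0 := by
  intro t ht
  have hn : Set.Ioo t₁ t₂ ∈ nhds t := isOpen_Ioo.mem_nhds ht
  have hA := hane t ht
  have hk1 := hκ₁ne t ht
  have hk := hκne t ht
  have e1 := hEq1 t ht
  have e2 := hEq t ht
  obtain ⟨d1, d1'⟩ := aux_derivs κ₁ t₁ t₂ hκ₁ t ht
  obtain ⟨d2, d2'⟩ := aux_derivs κ t₁ t₂ hκ t ht
  have da : HasDerivAt a (deriv a t) t :=
    (ha.contDiffAt.differentiableAt (by norm_num)).hasDerivAt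
  have hEpos : ∀ s ∈ Set.Ioo t₁ t₂,
      0 < C₀ * (κ₁ s / κ s) ^ 2 + (Wfun κ₁ κ s / (2 * a s)) ^ 2 := by
    intro s hs
    have h : κ₁ s / κ s ≠ 0 := div_ne_zero (hκ₁ne s hs) (hκne s hs)
    positivity
  have hW' : HasDerivAt (Wfun κ₁ κ) (κ₁ t * deriv (deriv κ) t - deriv (deriv κ₁) t * κ t) t := by
    have h := (d1.mul d2').sub (d1'.mul d2)
    refine HasDerivAt.congr_deriv h ?_
    ring
  have hV : HasDerivAt (fun s => Wfun κ₁ κ s / (2 * a s)) (2 * a t * C₀ * κ₁ t / κ t ^ 3) t := by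
    have h := hW'.div (da.const_mul 2) (by simpa using hA)
    refine HasDerivAt.congr_deriv h ?_
    have e1' : deriv (deriv κ₁) t = (deriv a t / a t) * deriv κ₁ t - Qfun a b c d t * κ₁ t := by
      linarith
    have e2' : deriv (deriv κ) t = (deriv a t / a t) * deriv κ t - Qfun a b c d t * κ t
        + C₀ * (2 * a t) ^ 2 / κ t ^ 3 := by linarith
    rw [e1', e2', Wfun]
    field_simp
    ring
  have hR : HasDerivAt (fun s => κ s / κ₁ s) (Wfun κ₁ κ t / κ₁ t ^ 2) t := by
    have h := d2.div d1 hk1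
    refine HasDerivAt.congr_deriv h ?_
    simp only [Wfun]
    ring
  have hR' : HasDerivAt (fun s => κ₁ s / κ s) (-Wfun κ₁ κ t / κ t ^ 2) t := by
    have h := d1.div d2 hk
    refine HasDerivAt.congr_deriv h ?_
    simp only [Wfun]
    ring
  have hE : HasDerivAt (fun s => C₀ * (κ₁ s / κ s) ^ 2 + (Wfun κ₁ κ s / (2 * a s)) ^ 2) 0 t := by
    have h := ((hR'.pow 2).const_mul C₀).add (hV.pow 2)
    refine HasDerivAt.congr_deriv h ?_
    norm_num
    field_simp
    ring
  have hEt := hEpos t ht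
  have hmain := (hγ t ht).add (((hR.mul hV).div (hE.const_mul 2) (by positivity)))
  have hev : (fun s => γ s + (deltaFun a κ₁ κ C₀ s) ^ 2 / (2 * Real.sqrt C₀)
          * (κ s / κ₁ s) * (Wfun κ₁ κ s / (2 * a s))) =ᶠ[nhds t]
      (fun s => γ s + (κ s / κ₁ s) * (Wfun κ₁ κ s / (2 * a s)) /
        (2 * (C₀ * (κ₁ s / κ s) ^ 2 + (Wfun κ₁ κ s / (2 * a s)) ^ 2))) := by
    filter_upwards [hn] with s hs
    have hs' := hEpos s hs
    have hq : (C₀ ^ ((1 : ℝ) / 4)) ^ 2 = Real.sqrt C₀ := by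
      rw [Real.sqrt_eq_rpow, ← Real.rpow_natCast, ← Real.rpow_mul hC₀.le]
      norm_num
    have hsq : Real.sqrt C₀ ≠ 0 := (Real.sqrt_pos.mpr hC₀).ne'
    rw [deltaFun, div_pow, hq, Real.sq_sqrt hs'.le]
    generalize C₀ * (κ₁ s / κ s) ^ 2 + (Wfun κ₁ κ s / (2 * a s)) ^ 2 = X at hs' ⊢
    have hX := hs'.ne'
    field_simp
  rw [hev.deriv_eq]
  refine (HasDerivAt.congr_deriv hmain ?_).deriv
  have key : Wfun κ₁ κ t / κ₁ t ^ 2 * (Wfun κ₁ κ t / (2 * a t))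
      + κ t / κ₁ t * (2 * a t * C₀ * κ₁ t / κ t ^ 3)
      = 2 * a t / κ₁ t ^ 2 * (C₀ * (κ₁ t / κ t) ^ 2 + (Wfun κ₁ κ t / (2 * a t)) ^ 2) := by
    field_simp
    ring
  simp only [Pi.mul_apply]
  rw [key]
  generalize C₀ * (κ₁ t / κ t) ^ 2 + (Wfun κ₁ κ t / (2 * a t)) ^ 2 = X at hEt ⊢
  have hX := hEt.ne'
  field_simp
  ring
end

section
/- (Time-dependent oscillator wave functions solve the Schrödinger equation.) Let a, b, c, d : ℝ → ℝ with a, c, d continuously differentiable, b continuous, a(t) ≠ 0 on an open interval I containing 0, let C₀ > 0, and let κ : I → ℝ be a twice continuously differentiable positive solution of the Ermakov equation κ′′ − (a′/a)κ′ + [4ab + (a′/a − c − d)(c+d) − c′ − d′]κ = C₀(2a)²/κ³. Set ε(t) = C₀^{1/4}/κ(t), θ(t) = (κ′(t) − (c(t)+d(t))κ(t))/(4a(t)κ(t)), and let φ : I → ℝ be differentiable with φ′(t) = 2√C₀·a(t)/κ(t)². Then for every natural number m, the function ψₘ(x,t) = exp(½∫₀ᵗ(d(s) − c(s))ds)·e^{−i(m+1/2)φ(t)}·√(ε(t))·exp(iθ(t)x²)·exp(−ε(t)²x²/2)·Hₘ(ε(t)x),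 with Hₘ the m-th physicists' Hermite polynomial, satisfies the time-dependent Schrödinger equation i ∂ψₘ/∂t = Hψₘ on ℝ × I, i.e. i(ψₘ)_t = −a(ψₘ)_xx + bx²ψₘ − ic(ψₘ + x(ψₘ)_x) − id·x(ψₘ)_x. -/
/-- The physicists' Hermite polynomials: H₀ = 1, Hₘ₊₁(ξ) = 2ξHₘ(ξ) − Hₘ′(ξ). -/
noncomputable def physHermite : ℕ → Polynomial ℝ
  | 0 => 1
  | n + 1 => 2 * Polynomial.X * physHermite n - Polynomial.derivative (physHermite n)

/-- Hₘ(x), the m-th physicists' Hermite polynomial evaluated at x. -/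
noncomputable def pH (m : ℕ) (x : ℝ) : ℝ := (physHermite m).eval x

/-- ε(t) = C₀^{1/4}/κ(t). -/
noncomputable def epsFun (κ : ℝ → ℝ) (C₀ t : ℝ) : ℝ := C₀ ^ ((1 : ℝ) / 4) / κ t

/-- θ(t) = (κ′ − (c+d)κ)/(4aκ). -/
noncomputable def thetaFun (a c d κ : ℝ → ℝ) (t : ℝ) : ℝ :=
  (deriv κ t - (c t + d t) * κ t) / (4 * a t * κ t)

/-- The time-dependent oscillator wave function
ψₘ(x,t) = exp(½∫₀ᵗ(d−c))·e^{−i(m+1/2)φ(t)}·√ε(t)·exp(iθ(t)x²)·exp(−ε²x²/2)·Hₘ(εx). -/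
noncomputable def psiWave (a c d κ φ : ℝ → ℝ) (C₀ : ℝ) (m : ℕ) (x t : ℝ) : ℂ :=
  (Real.exp ((1 / 2) * ∫ s in (0:ℝ)..t, d s - c s) : ℂ) *
    Complex.exp (-Complex.I * ((m : ℂ) + 1 / 2) * (φ t : ℂ)) *
    (Real.sqrt (epsFun κ C₀ t) : ℂ) *
    Complex.exp (Complex.I * (thetaFun a c d κ t : ℂ) * (x : ℂ) ^ 2) *
    (Real.exp (-(epsFun κ C₀ t) ^ 2 * x ^ 2 / 2) : ℂ) *
    (pH m (epsFun κ C₀ t * x) : ℂ)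

theorem physHermite_deriv (n : ℕ) : Polynomial.derivative (physHermite (n + 1)) =
    2 * ((n : Polynomial ℝ) + 1) * physHermite n := by
  induction n with
  | zero => simp [physHermite]
  | succ n ih =>
    have h : physHermite (n + 1 + 1) = 2 * Polynomial.X * physHermite (n + 1)
      - Polynomial.derivative (physHermite (n + 1)) := rfl
    have h' : physHermite (n + 1) = 2 * Polynomial.X * physHermite n
      - Polynomial.derivative (physHermite n) := rfl
    have hder : Polynomial.derivative (2 * ((n : Polynomial ℝ) + 1) * physHermite n)
        = 2 * ((n : Polynomial ℝ) + 1) * Polynomial.derivative (physHermite n) := by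
      simp [Polynomial.derivative_mul]
    rw [h, Polynomial.derivative_sub, ih, hder, Polynomial.derivative_mul, ih]
    simp only [Polynomial.derivative_mul, Polynomial.derivative_X, Polynomial.derivative_ofNat]
    rw [h']
    push_cast
    ring

theorem physHermite_ode (n : ℕ) :
    Polynomial.derivative (Polynomial.derivative (physHermite n)) =
    2 * Polynomial.X * Polynomial.derivative (physHermite n)
      - 2 * (n : Polynomial ℝ) * physHermite n := by
  cases n with
  | zero => simp [physHermite]
  | succ n =>
    have h' : physHermite (n + 1) = 2 * Polynomial.X * physHermite n
      - Polynomial.derivative (physHermite n) := rfl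
    have hder : Polynomial.derivative (2 * ((n : Polynomial ℝ) + 1) * physHermite n)
        = 2 * ((n : Polynomial ℝ) + 1) * Polynomial.derivative (physHermite n) := by
      simp [Polynomial.derivative_mul]
    rw [physHermite_deriv, hder, h']
    push_cast
    ring

/-- Model function. -/
noncomputable def gaussPoly (A g : ℂ) (e : ℝ) (P : Polynomial ℝ) (x : ℝ) : ℂ :=
  A * Complex.exp (g * (x : ℂ) ^ 2) * ((P.eval (e * x) : ℝ) : ℂ)

theorem gaussPoly_hasDerivAt (A g : ℂ) (e : ℝ) (P : Polynomial ℝ) (x : ℝ) :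
    HasDerivAt (gaussPoly A g e P)
      (2 * g * x * gaussPoly A g e P x + e * gaussPoly A g e (Polynomial.derivative P) x) x := by
  have hx : HasDerivAt (fun y : ℝ => (y : ℂ)) 1 x := Complex.ofRealCLM.hasDerivAt
  have h1 := (((hx.pow 2).const_mul g).cexp).const_mul A
  have h2 : HasDerivAt (fun y : ℝ => P.eval (e * y))
      ((Polynomial.derivative P).eval (e * x) * (e * 1)) x :=
    (P.hasDerivAt (e * x)).comp x ((hasDerivAt_id x).const_mul e)
  have h3 := h1.mul h2.ofReal_comp
  refine HasDerivAt.congr_deriv h3 ?_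
  simp only [gaussPoly, Pi.mul_apply]
  push_cast
  simp
  ring

theorem gaussPoly_time (A g : ℝ → ℂ) (e : ℝ → ℝ) (P : Polynomial ℝ) (x t : ℝ) (r g' : ℂ) (e' : ℝ)
    (hA : HasDerivAt A (r * A t) t) (hg : HasDerivAt g g' t) (he : HasDerivAt e e' t) :
    HasDerivAt (fun s => gaussPoly (A s) (g s) (e s) P x)
      ((r + g' * x ^ 2) * gaussPoly (A t) (g t) (e t) P x
        + e' * x * gaussPoly (A t) (g t) (e t) (Polynomial.derivative P) x) t := by
  have h1 := hA.mul ((hg.mul_const ((x : ℂ) ^ 2)).cexp)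
  have h2 : HasDerivAt (fun s : ℝ => P.eval (e s * x))
      ((Polynomial.derivative P).eval (e t * x) * (e' * x)) t :=
    HasDerivAt.comp (h₂ := fun y => P.eval y) t (P.hasDerivAt (e t * x)) (he.mul_const x)
  have h3 := h1.mul h2.ofReal_comp
  refine HasDerivAt.congr_deriv h3 ?_
  simp only [gaussPoly, Pi.mul_apply]
  push_cast
  ring

/-- Amplitude. -/
noncomputable def ampl (c d κ φ : ℝ → ℝ) (C₀ : ℝ) (m : ℕ) (t : ℝ) : ℂ :=
  (Real.exp ((1 / 2) * ∫ s in (0:ℝ)..t, d s - c s) : ℂ) *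
    Complex.exp (-Complex.I * ((m : ℂ) + 1 / 2) * (φ t : ℂ)) *
    (Real.sqrt (epsFun κ C₀ t) : ℂ)

theorem psiWave_eq (a c d κ φ : ℝ → ℝ) (C₀ : ℝ) (m : ℕ) (x t : ℝ) :
    psiWave a c d κ φ C₀ m x t = gaussPoly (ampl c d κ φ C₀ m t)
      (Complex.I * (thetaFun a c d κ t : ℂ) - (epsFun κ C₀ t : ℂ) ^ 2 / 2)
      (epsFun κ C₀ t) (physHermite m) x := by
  simp only [psiWave, gaussPoly, ampl, pH]
  have : (Complex.I * (thetaFun a c d κ t : ℂ) - (epsFun κ C₀ t : ℂ) ^ 2 / 2) * (x : ℂ) ^ 2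
    = Complex.I * (thetaFun a c d κ t : ℂ) * (x : ℂ) ^ 2
      + ((-(epsFun κ C₀ t) ^ 2 * x ^ 2 / 2 : ℝ) : ℂ) := by push_cast; ring
  rw [this, Complex.exp_add, Complex.ofReal_exp (-(epsFun κ C₀ t) ^ 2 * x ^ 2 / 2)]
  ring

theorem ampl_hasDerivAt (c d κ φ : ℝ → ℝ) (C₀ : ℝ) (m : ℕ) (t e' f' : ℝ)
    (hc : Continuous c) (hd : Continuous d) (he : HasDerivAt (epsFun κ C₀) e' t)
    (hpos : 0 < epsFun κ C₀ t) (hf : HasDerivAt φ f' t) :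
    HasDerivAt (ampl c d κ φ C₀ m)
      ((((d t - c t) / 2 : ℂ) - Complex.I * ((m : ℂ) + 1 / 2) * f' + e' / (2 * epsFun κ C₀ t))
        * ampl c d κ φ C₀ m t) t := by
  have h1 : HasDerivAt (fun t => ∫ s in (0:ℝ)..t, d s - c s) (d t - c t) t :=
    intervalIntegral.integral_hasDerivAt_right ((hd.sub hc).intervalIntegrable _ _)
      ((hd.sub hc).stronglyMeasurableAtFilter _ _) (hd.sub hc).continuousAt
  have h2 := (h1.const_mul (1 / 2)).exp.ofReal_comp
  have h3 := (hf.ofReal_comp.const_mul (-Complex.I * ((m : ℂ) + 1 / 2))).cexp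
  have h4 := (he.sqrt hpos.ne').ofReal_comp
  have h5 := (h2.mul h3).mul h4
  have hs : (e' / (2 * √(epsFun κ C₀ t)) : ℝ) = e' / (2 * epsFun κ C₀ t) * √(epsFun κ C₀ t) := by
    have h := Real.sq_sqrt hpos.le
    have h' := Real.sqrt_pos.2 hpos
    rw [div_mul_eq_mul_div, div_eq_div_iff (by positivity) (by positivity)]
    linear_combination (-2 * e') * h
  rw [hs] at h5
  refine HasDerivAt.congr_deriv h5 ?_
  simp only [ampl, Pi.mul_apply]
  push_cast
  ring

/-- Time-dependent oscillator wave functions solve the Schrödinger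
equation: if κ is a positive solution of the Ermakov equation with C₀ > 0 on an open
interval (t₁,t₂) containing 0 and φ′ = 2√C₀·a/κ², then for every m the wave function
ψₘ satisfies i(ψₘ)_t = −a(ψₘ)_xx + bx²ψₘ − ic(ψₘ + x(ψₘ)_x) − id·x(ψₘ)_x. -/
theorem statement_19
    (a b c d κ φ : ℝ → ℝ) (t₁ t₂ : ℝ) (C₀ : ℝ) (hC₀ : 0 < C₀)
    (ha : ContDiff ℝ 1 a) (hc : ContDiff ℝ 1 c) (hd : ContDiff ℝ 1 d)
    (hb : Continuous b)
    (hane : ∀ t ∈ Set.Ioo t₁ t₂, a t ≠ 0)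
    (h0 : (0 : ℝ) ∈ Set.Ioo t₁ t₂)
    (hκ : ContDiffOn ℝ 2 κ (Set.Ioo t₁ t₂))
    (hκpos : ∀ t ∈ Set.Ioo t₁ t₂, 0 < κ t)
    -- the Ermakov equation κ′′ − (a′/a)κ′ + Qκ = C₀(2a)²/κ³
    (hErm : ∀ t ∈ Set.Ioo t₁ t₂, deriv (deriv κ) t - (deriv a t / a t) * deriv κ t
        + Qfun a b c d t * κ t = C₀ * (2 * a t) ^ 2 / κ t ^ 3)
    -- the phase equation φ′ = 2√C₀·a/κ²
    (hφ : ∀ t ∈ Set.Ioo t₁ t₂, HasDerivAt φ (2 * Real.sqrt C₀ * a t / κ t ^ 2) t) :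
    ∀ m : ℕ, ∀ x : ℝ, ∀ t ∈ Set.Ioo t₁ t₂,
      Complex.I * deriv (fun t' => psiWave a c d κ φ C₀ m x t') t =
        -(a t : ℂ) * deriv (fun x' => deriv (fun x'' => psiWave a c d κ φ C₀ m x'' t) x') x
          + (b t : ℂ) * (x : ℂ) ^ 2 * psiWave a c d κ φ C₀ m x t
          - Complex.I * (c t : ℂ) *
              (psiWave a c d κ φ C₀ m x t
                + (x : ℂ) * deriv (fun x' => psiWave a c d κ φ C₀ m x' t) x)
          - Complex.I * (d t : ℂ) *
              ((x : ℂ) * deriv (fun x' => psiWave a c d κ φ C₀ m x' t) x) := by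
  intro m x t ht
  have hnhds : Set.Ioo t₁ t₂ ∈ nhds t := Ioo_mem_nhds ht.1 ht.2
  have hκt : ContDiffAt ℝ 2 κ t := hκ.contDiffAt hnhds
  have hk0 : κ t ≠ 0 := (hκpos t ht).ne'
  have ha0 := hane t ht
  have hk1 : HasDerivAt κ (deriv κ t) t := (hκt.differentiableAt (by norm_num)).hasDerivAt
  have hk2 : HasDerivAt (deriv κ) (deriv (deriv κ) t) t := by
    have h : ContDiffOn ℝ 1 (deriv κ) (Set.Ioo t₁ t₂) :=
      hκ.deriv_of_isOpen isOpen_Ioo (by norm_num)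
    exact ((h.contDiffAt hnhds).differentiableAt (by norm_num)).hasDerivAt
  have ha1 : HasDerivAt a (deriv a t) t := (ha.differentiable (by norm_num) t).hasDerivAt
  have hc1 : HasDerivAt c (deriv c t) t := (hc.differentiable (by norm_num) t).hasDerivAt
  have hd1 : HasDerivAt d (deriv d t) t := (hd.differentiable (by norm_num) t).hasDerivAt
  have hqpos : 0 < C₀ ^ ((1 : ℝ) / 4) := Real.rpow_pos_of_pos hC₀ _
  have hepos : 0 < epsFun κ C₀ t := div_pos hqpos (hκpos t ht)
  have hq4 : (C₀ ^ ((1 : ℝ) / 4)) ^ 4 = C₀ := by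
    rw [← Real.rpow_natCast, ← Real.rpow_mul hC₀.le]; norm_num
  have hq2 : √C₀ = (C₀ ^ ((1 : ℝ) / 4)) ^ 2 := by
    rw [Real.sqrt_eq_iff_mul_self_eq hC₀.le (by positivity)]
    linear_combination -hq4
  set S : ℝ := c t + d t with hS
  have he : HasDerivAt (epsFun κ C₀)
      (-(4 * a t * thetaFun a c d κ t + S) * epsFun κ C₀ t) t := by
    have h := (hasDerivAt_const t (C₀ ^ ((1 : ℝ) / 4))).div hk1 hk0
    refine HasDerivAt.congr_deriv h ?_
    simp only [thetaFun, epsFun]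
    field_simp
    ring
  have hth : HasDerivAt (thetaFun a c d κ)
      (-(4 * a t * thetaFun a c d κ t ^ 2 - a t * epsFun κ C₀ t ^ 4 + b t
        + 2 * S * thetaFun a c d κ t)) t := by
    have h := (hk2.sub ((hc1.add hd1).mul hk1)).div ((ha1.const_mul 4).mul hk1)
      (mul_ne_zero (mul_ne_zero four_ne_zero ha0) hk0)
    refine HasDerivAt.congr_deriv h ?_
    have hE := hErm t ht
    have hE2 : deriv (deriv κ) t = C₀ * (2 * a t) ^ 2 / κ t ^ 3 + (deriv a t / a t) * deriv κ t
        - Qfun a b c d t * κ t := by linear_combination hE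
    simp only [Pi.add_apply, Pi.sub_apply, Pi.mul_apply]
    rw [hE2]
    simp only [thetaFun, epsFun, Qfun, hS, div_pow, hq4]
    field_simp
    ring
  have hf : HasDerivAt φ (2 * a t * epsFun κ C₀ t ^ 2) t := by
    convert hφ t ht using 1
    rw [hq2]
    simp only [epsFun]
    field_simp
  have hA := ampl_hasDerivAt c d κ φ C₀ m t _ _ hc.continuous hd.continuous he hepos hf
  have hg := (hth.ofReal_comp.const_mul Complex.I).sub ((he.ofReal_comp.pow 2).div_const 2)
  have hT := gaussPoly_time _ _ _ (physHermite m) x t _ _ _ hA hg he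
  simp only [psiWave_eq]
  have hX : ∀ P : Polynomial ℝ, deriv (fun y => gaussPoly (ampl c d κ φ C₀ m t)
      (Complex.I * (thetaFun a c d κ t : ℂ) - (epsFun κ C₀ t : ℂ) ^ 2 / 2)
      (epsFun κ C₀ t) P y) = _ := fun P => funext fun y => (gaussPoly_hasDerivAt _ _ _ P y).deriv
  have hT' := hT.deriv
  simp only [Pi.sub_apply, Pi.pow_apply] at hT'
  have hx : HasDerivAt (fun y : ℝ => (y : ℂ)) 1 x := Complex.ofRealCLM.hasDerivAt
  have hXX := ((((hx.const_mul (2 * (Complex.I * (thetaFun a c d κ t : ℂ)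
      - (epsFun κ C₀ t : ℂ) ^ 2 / 2))).mul
      (gaussPoly_hasDerivAt (ampl c d κ φ C₀ m t)
      (Complex.I * (thetaFun a c d κ t : ℂ) - (epsFun κ C₀ t : ℂ) ^ 2 / 2)
      (epsFun κ C₀ t) (physHermite m) x))).add
      ((gaussPoly_hasDerivAt (ampl c d κ φ C₀ m t)
      (Complex.I * (thetaFun a c d κ t : ℂ) - (epsFun κ C₀ t : ℂ) ^ 2 / 2)
      (epsFun κ C₀ t) (Polynomial.derivative (physHermite m)) x).const_mul
        (epsFun κ C₀ t : ℂ))).deriv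
  have hH : gaussPoly (ampl c d κ φ C₀ m t)
      (Complex.I * (thetaFun a c d κ t : ℂ) - (epsFun κ C₀ t : ℂ) ^ 2 / 2)
      (epsFun κ C₀ t) (Polynomial.derivative (Polynomial.derivative (physHermite m))) x
      = 2 * (epsFun κ C₀ t * x) * gaussPoly (ampl c d κ φ C₀ m t)
      (Complex.I * (thetaFun a c d κ t : ℂ) - (epsFun κ C₀ t : ℂ) ^ 2 / 2)
      (epsFun κ C₀ t) (Polynomial.derivative (physHermite m)) x
      - 2 * m * gaussPoly (ampl c d κ φ C₀ m t)
      (Complex.I * (thetaFun a c d κ t : ℂ) - (epsFun κ C₀ t : ℂ) ^ 2 / 2)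
      (epsFun κ C₀ t) (physHermite m) x := by
    rw [physHermite_ode]
    simp only [gaussPoly, Polynomial.eval_sub, Polynomial.eval_mul, Polynomial.eval_X,
      Polynomial.eval_ofNat, Polynomial.eval_natCast]
    push_cast
    ring
  have hXX' : deriv (fun y : ℝ => 2 * (Complex.I * (thetaFun a c d κ t : ℂ)
      - (epsFun κ C₀ t : ℂ) ^ 2 / 2) * (y : ℂ) * gaussPoly (ampl c d κ φ C₀ m t)
      (Complex.I * (thetaFun a c d κ t : ℂ) - (epsFun κ C₀ t : ℂ) ^ 2 / 2)
      (epsFun κ C₀ t) (physHermite m) y + (epsFun κ C₀ t : ℂ) * gaussPoly (ampl c d κ φ C₀ m t)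
      (Complex.I * (thetaFun a c d κ t : ℂ) - (epsFun κ C₀ t : ℂ) ^ 2 / 2)
      (epsFun κ C₀ t) (Polynomial.derivative (physHermite m)) y) x = _ := hXX
  rw [hX]
  simp only []
  rw [hXX', hT', hH]
  have hne : (epsFun κ C₀ t : ℂ) ≠ 0 := by exact_mod_cast hepos.ne'
  generalize gaussPoly _ _ _ (physHermite m) x = U
  generalize gaussPoly _ _ _ (Polynomial.derivative (physHermite m)) x = V
  simp only [hS]
  push_cast
  generalize (epsFun κ C₀ t : ℂ) = e at *
  generalize (thetaFun a c d κ t : ℂ) = θ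
  have hI := Complex.I_sq
  field_simp
  ring_nf
  simp only [hI]
  ring
end
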